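/- Take F(x) = x, so ψ^ε(β) = 2 + ε(1/E(β) − 2). For every ε > 0 there exists β* with 2 < β* < 3 such that ψ^ε(β*) = β*. -/

import Mathlib

/-- The orbit of `1` under the β-map `T_β(x) = βx mod 1`: `t₀ = 1`,
`t_{n+1} = β t_n − ⌊β t_n⌋`. -/
noncomputable def betaOrbit (β : ℝ) : ℕ → ℝ
  | 0 => 1
  | n + 1 => Int.fract (β * betaOrbit β n)

/-- `E(β) = (∑ t_n(β)²/(2βⁿ)) / (∑ t_n(β)/βⁿ)`, the expectation of the unique acim of
the β-map. -/
noncomputable def Ebeta (β : ℝ) : ℝ :=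
  (∑' n : ℕ, (betaOrbit β n) ^ 2 / (2 * β ^ n)) / (∑' n : ℕ, betaOrbit β n / β ^ n)

/-- `ψ^ε(β) = 2 + ε F(1/E(β) − 2)`. -/
noncomputable def psi (ε : ℝ) (F : ℝ → ℝ) (β : ℝ) : ℝ :=
  2 + ε * F (1 / Ebeta β - 2)

open Filter Topology Set in
lemma bo_mem (β : ℝ) (n : ℕ) : 0 ≤ betaOrbit β n ∧ betaOrbit β n ≤ 1 := by
  cases n with
  | zero => simp [betaOrbit]
  | succ n => exact ⟨Int.fract_nonneg _, (Int.fract_lt_one _).le⟩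

/-- The left limit (quasi-greedy) orbit. -/
noncomputable def leftOrbit (β : ℝ) : ℕ → ℝ
  | 0 => 1
  | n + 1 => β * leftOrbit β n - ((⌈β * leftOrbit β n⌉ - 1 : ℤ) : ℝ)

lemma lo_mem (β : ℝ) (n : ℕ) : 0 < leftOrbit β n ∧ leftOrbit β n ≤ 1 := by
  cases n with
  | zero => simp [leftOrbit]
  | succ n =>
    simp only [leftOrbit]
    push_cast
    constructor
    · linarith [Int.ceil_lt_add_one (β * leftOrbit β n)]
    · linarith [Int.le_ceil (β * leftOrbit β n)]

open Filter Topology Set in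
lemma right_lim (β : ℝ) (hβ : 2 ≤ β) (n : ℕ) :
    Tendsto (fun b => betaOrbit b n) (𝓝[>] β) (𝓝 (betaOrbit β n)) ∧
    ∀ᶠ b in 𝓝[>] β, betaOrbit β n ≤ betaOrbit b n := by
  induction n with
  | zero => simp [betaOrbit]
  | succ n ih =>
    obtain ⟨h1, h2⟩ := ih
    have hid : Tendsto (fun b : ℝ => b) (𝓝[>] β) (𝓝 β) := tendsto_id.mono_left nhdsWithin_le_nhds
    have h3 := hid.mul h1
    have h4 : ∀ᶠ b in 𝓝[>] β, β * betaOrbit β n ≤ b * betaOrbit b n := by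
      filter_upwards [h2, self_mem_nhdsWithin] with b hb hb'
      have hb' : β < b := hb'
      exact mul_le_mul hb'.le hb (bo_mem β n).1 (by linarith)
    have h5 := h3.eventually (gt_mem_nhds (Int.lt_floor_add_one (β * betaOrbit β n)))
    have h6 : ∀ᶠ b in 𝓝[>] β,
        betaOrbit b (n+1) = b * betaOrbit b n - ⌊β * betaOrbit β n⌋ := by
      filter_upwards [h4, h5] with b h4 h5
      have : ⌊b * betaOrbit b n⌋ = ⌊β * betaOrbit β n⌋ :=
        Int.floor_eq_iff.2 ⟨(Int.floor_le _).trans h4, h5⟩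
      rw [← this]; rfl
    constructor
    · have h7 := h3.sub_const (⌊β * betaOrbit β n⌋ : ℝ)
      exact h7.congr' (h6.mono fun b hb => hb.symm)
    · filter_upwards [h4, h6] with b h4 h6
      rw [h6]
      have : betaOrbit β (n+1) = β * betaOrbit β n - ⌊β * betaOrbit β n⌋ := rfl
      linarith

open Filter Topology Set in
lemma left_lim (β : ℝ) (hβ : 2 ≤ β) (n : ℕ) :
    Tendsto (fun b => betaOrbit b n) (𝓝[<] β) (𝓝 (leftOrbit β n)) ∧
    ∀ᶠ b in 𝓝[<] β, betaOrbit b n ≤ leftOrbit β n := by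
  induction n with
  | zero => simp [betaOrbit, leftOrbit]
  | succ n ih =>
    obtain ⟨h1, h2⟩ := ih
    have hid : Tendsto (fun b : ℝ => b) (𝓝[<] β) (𝓝 β) := tendsto_id.mono_left nhdsWithin_le_nhds
    have h3 := hid.mul h1
    have h4 : ∀ᶠ b in 𝓝[<] β, b * betaOrbit b n < β * leftOrbit β n := by
      filter_upwards [h2, self_mem_nhdsWithin] with b hb hb'
      have hb' : b < β := hb'
      have hs := (lo_mem β n).1
      rcases (bo_mem b n).1.eq_or_lt with h0 | h0
      · rw [← h0, mul_zero]; positivity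
      · calc b * betaOrbit b n < β * betaOrbit b n := mul_lt_mul_of_pos_right hb' h0
          _ ≤ β * leftOrbit β n := mul_le_mul_of_nonneg_left hb (by linarith)
    have h5 := h3.eventually (lt_mem_nhds (a := ((⌈β * leftOrbit β n⌉ - 1 : ℤ) : ℝ))
      (by push_cast; linarith [Int.ceil_lt_add_one (β * leftOrbit β n)]))
    have h6 : ∀ᶠ b in 𝓝[<] β,
        betaOrbit b (n+1) = b * betaOrbit b n - ((⌈β * leftOrbit β n⌉ - 1 : ℤ) : ℝ) := by
      filter_upwards [h4, h5] with b h4 h5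
      have : ⌊b * betaOrbit b n⌋ = ⌈β * leftOrbit β n⌉ - 1 :=
        Int.floor_eq_iff.2 ⟨h5.le, by push_cast; linarith [Int.le_ceil (β * leftOrbit β n)]⟩
      rw [← this]; rfl
    constructor
    · have h7 := h3.sub_const (((⌈β * leftOrbit β n⌉ - 1 : ℤ) : ℝ))
      exact h7.congr' (h6.mono fun b hb => hb.symm)
    · filter_upwards [h4, h6] with b h4 h6
      rw [h6]
      simp only [leftOrbit]
      linarith

lemma summ_aux (g : ℝ → ℝ) (hg : ∀ x, 0 ≤ x → x ≤ 1 → |g x| ≤ 1) (u : ℕ → ℝ)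
    (hu : ∀ n, 0 ≤ u n ∧ u n ≤ 1) (β : ℝ) (hβ : 2 ≤ β) :
    Summable fun n => g (u n) / β ^ n := by
  refine Summable.of_norm_bounded (g := fun n => (1 / 2 : ℝ) ^ n) summable_geometric_two ?_
  intro n
  rw [Real.norm_eq_abs, abs_div, one_div_pow, abs_of_pos (a := β ^ n) (by positivity)]
  have := hg _ (hu n).1 (hu n).2
  gcongr

open Filter Topology Set in
lemma sum_lim (g : ℝ → ℝ) (hc : Continuous g) (hg : ∀ x, 0 ≤ x → x ≤ 1 → |g x| ≤ 1)
    (u : ℕ → ℝ) (β : ℝ) (hβ : 2 ≤ β) (l : Filter ℝ) (hl : l ≤ 𝓝 β)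
    (h : ∀ n, Tendsto (fun b => betaOrbit b n) l (𝓝 (u n))) :
    Tendsto (fun b => ∑' n, g (betaOrbit b n) / b ^ n) l (𝓝 (∑' n, g (u n) / β ^ n)) := by
  have hid : Tendsto (fun b : ℝ => b) l (𝓝 β) := tendsto_id.mono_left hl
  refine tendsto_tsum_of_dominated_convergence (bound := fun n => (2 / 3 : ℝ) ^ n)
    (summable_geometric_of_lt_one (by norm_num) (by norm_num)) ?_ ?_
  · intro n
    exact ((hc.tendsto _).comp (h n)).div (hid.pow n) (by positivity)
  · filter_upwards [hid.eventually (lt_mem_nhds (a := 3 / 2) (by linarith))] with b hb n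
    have h0 : (0:ℝ) < b := by linarith
    rw [Real.norm_eq_abs, abs_div, abs_of_pos (a := b ^ n) (by positivity)]
    have := hg _ (bo_mem b n).1 (bo_mem b n).2
    calc |g (betaOrbit b n)| / b ^ n ≤ 1 / (3 / 2) ^ n := by gcongr
      _ = (2 / 3) ^ n := by rw [← one_div_pow]; norm_num

lemma prop_aux (β : ℝ) (hβ : 2 ≤ β) : ∃ c : ℝ, 0 < c ∧
    ∀ g : ℝ → ℝ, g 0 = 0 → (∀ x, 0 ≤ x → x ≤ 1 → |g x| ≤ 1) →
      ∑' n, g (betaOrbit β n) / β ^ n = c * ∑' n, g (leftOrbit β n) / β ^ n := by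
  by_cases hall : ∀ n, betaOrbit β n = leftOrbit β n
  · exact ⟨1, one_pos, fun g _ _ => by simp [hall]⟩
  push Not at hall
  classical
  let p := Nat.find hall
  have hp : betaOrbit β p ≠ leftOrbit β p := Nat.find_spec hall
  have hlt : ∀ m, m < p → betaOrbit β m = leftOrbit β m := fun m hm => by
    simpa using Nat.find_min hall hm
  obtain ⟨q, hq⟩ : ∃ q, p = q + 1 := Nat.exists_eq_succ_of_ne_zero (by
    intro h0; rw [h0] at hp; exact hp rfl)
  have hqe := hlt q (by omega)
  have hz : betaOrbit β p = 0 ∧ leftOrbit β p = 1 := by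
    rw [hq] at hp ⊢
    simp only [betaOrbit, leftOrbit] at hp ⊢
    rw [hqe] at hp ⊢
    set x := β * leftOrbit β q
    by_cases hx : Int.fract x = 0
    · refine ⟨hx, ?_⟩
      have : x = (⌊x⌋ : ℝ) := by rw [Int.fract] at hx; linarith
      rw [this]; simp
    · exfalso
      apply hp
      have h1 : ⌈x⌉ = ⌊x⌋ + 1 := by
        rw [Int.ceil_eq_iff]
        have h2 := Int.fract_nonneg x
        have h3 := Int.lt_floor_add_one x
        have h4 : 0 < Int.fract x := lt_of_le_of_ne h2 (Ne.symm hx)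
        rw [Int.fract] at h4
        push_cast
        constructor <;> linarith
      rw [h1, Int.fract]; push_cast; ring
  have hz' : ∀ n, betaOrbit β (n + p) = 0 := by
    intro n
    induction n with
    | zero => simpa using hz.1
    | succ n ih =>
      rw [show n + 1 + p = (n + p) + 1 by omega]
      simp [betaOrbit, ih]
  have hs' : ∀ n, leftOrbit β (n + p) = leftOrbit β n := by
    intro n
    induction n with
    | zero => simpa [leftOrbit] using hz.2
    | succ n ih =>
      rw [show n + 1 + p = (n + p) + 1 by omega]
      simp [leftOrbit, ih]
  refine ⟨1 - 1 / β ^ p, ?_, ?_⟩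
  · have : 1 < β ^ p := one_lt_pow₀ (by linarith) (by omega)
    have := (div_lt_one (by linarith)).2 this
    linarith
  · intro g g0 hg
    have s1 := summ_aux g hg _ (bo_mem β) β hβ
    have s2 := summ_aux g hg _ (fun n => ⟨(lo_mem β n).1.le, (lo_mem β n).2⟩) β hβ
    have e1 := s1.sum_add_tsum_nat_add p
    have e2 := s2.sum_add_tsum_nat_add p
    simp only [hz', g0, zero_div, tsum_zero, add_zero] at e1
    have e3 : ∑' n, g (leftOrbit β (n + p)) / β ^ (n + p)
        = (1 / β ^ p) * ∑' n, g (leftOrbit β n) / β ^ n := by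
      rw [← tsum_mul_left]
      congr 1; ext n
      rw [hs', pow_add]; field_simp
    rw [e3] at e2
    have e4 : ∑ i ∈ Finset.range p, g (betaOrbit β i) / β ^ i
        = ∑ i ∈ Finset.range p, g (leftOrbit β i) / β ^ i :=
      Finset.sum_congr rfl fun i hi => by rw [hlt i (Finset.mem_range.1 hi)]
    rw [← e1, e4]
    linarith

/-- Numerator and denominator. -/
noncomputable def sNum (u : ℕ → ℝ) (β : ℝ) : ℝ := ∑' n, (fun x : ℝ => x ^ 2 / 2) (u n) / β ^ n
noncomputable def sDen (u : ℕ → ℝ) (β : ℝ) : ℝ := ∑' n, (fun x : ℝ => x) (u n) / β ^ n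

lemma gnum : ∀ x : ℝ, 0 ≤ x → x ≤ 1 → |(fun x : ℝ => x ^ 2 / 2) x| ≤ 1 := by
  intro x h0 h1
  simp only
  rw [abs_of_nonneg (by positivity)]; nlinarith

lemma gden : ∀ x : ℝ, 0 ≤ x → x ≤ 1 → |(fun x : ℝ => x) x| ≤ 1 := by
  intro x h0 h1
  simp only
  rw [abs_of_nonneg h0]; exact h1

lemma sNum_pos (u : ℕ → ℝ) (h0 : u 0 = 1) (hu : ∀ n, 0 ≤ u n ∧ u n ≤ 1) (β : ℝ) (hβ : 2 ≤ β) :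
    0 < sNum u β := by
  have s := summ_aux _ gnum u hu β hβ
  refine s.tsum_pos (fun n => ?_) 0 ?_
  · have := hu n
    positivity
  · simp [h0]

lemma inv_E (β : ℝ) : 1 / Ebeta β = sDen (betaOrbit β) β / sNum (betaOrbit β) β := by
  unfold Ebeta sDen sNum
  rw [one_div_div]
  simp only [div_div]

open Filter Topology Set in
lemma cont_E (β : ℝ) (hβ : 2 ≤ β) : ContinuousAt (fun b => 1 / Ebeta b) β := by
  have e : (fun b => 1 / Ebeta b) = fun b => sDen (betaOrbit b) b / sNum (betaOrbit b) b :=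
    funext inv_E
  rw [e]
  have hN := sNum_pos (betaOrbit β) rfl (bo_mem β) β hβ
  have hN' := sNum_pos (leftOrbit β) rfl
    (fun n => ⟨(lo_mem β n).1.le, (lo_mem β n).2⟩) β hβ
  rw [continuousAt_iff_continuous_left'_right']
  constructor
  · have hn := sum_lim _ (by fun_prop) gnum (leftOrbit β) β hβ (𝓝[<] β) nhdsWithin_le_nhds
      (fun n => (left_lim β hβ n).1)
    have hd := sum_lim _ (by fun_prop) gden (leftOrbit β) β hβ (𝓝[<] β) nhdsWithin_le_nhds
      (fun n => (left_lim β hβ n).1)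
    have hq := hd.div hn hN'.ne'
    obtain ⟨c, hc, h⟩ := prop_aux β hβ
    have k1 : sNum (betaOrbit β) β = c * sNum (leftOrbit β) β := h _ (by simp) gnum
    have k2 : sDen (betaOrbit β) β = c * sDen (leftOrbit β) β := h _ (by simp) gden
    have : sDen (betaOrbit β) β / sNum (betaOrbit β) β
        = sDen (leftOrbit β) β / sNum (leftOrbit β) β := by
      rw [k1, k2, mul_div_mul_left _ _ hc.ne']
    unfold ContinuousWithinAt
    beta_reduce
    rw [this]
    exact hq
  · have hn := sum_lim _ (by fun_prop) gnum (betaOrbit β) β hβ (𝓝[>] β) nhdsWithin_le_nhds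
      (fun n => (right_lim β hβ n).1)
    have hd := sum_lim _ (by fun_prop) gden (betaOrbit β) β hβ (𝓝[>] β) nhdsWithin_le_nhds
      (fun n => (right_lim β hβ n).1)
    exact hd.div hn hN.ne'

lemma E_three : 1 / Ebeta 3 = 2 := by
  have hz : ∀ n, betaOrbit 3 (n + 1) = 0 := by
    intro n
    induction n with
    | zero =>
      simp only [betaOrbit]
      rw [show (3 : ℝ) * 1 = ((3 : ℤ) : ℝ) by norm_num, Int.fract_intCast]
    | succ n ih => rw [betaOrbit, ih]; simp
  have h1 : sNum (betaOrbit 3) 3 = 1 / 2 := by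
    unfold sNum
    rw [tsum_eq_single 0]
    · simp [betaOrbit]
    · intro n hn
      obtain ⟨m, rfl⟩ := Nat.exists_eq_succ_of_ne_zero hn
      simp [hz]
  have h2 : sDen (betaOrbit 3) 3 = 1 := by
    unfold sDen
    rw [tsum_eq_single 0]
    · simp [betaOrbit]
    · intro n hn
      obtain ⟨m, rfl⟩ := Nat.exists_eq_succ_of_ne_zero hn
      simp [hz]
  rw [inv_E, h1, h2]; norm_num

lemma near_two (m : ℕ) (δ : ℝ) (hδ : 0 < δ) (hm : δ * 3 ^ m ≤ 1 / 2) (hδ1 : δ < 1) :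
    m * δ / 6 ≤ 1 / Ebeta (2 + δ) - 2 := by
  set β := 2 + δ with hβd
  have hβ : 2 ≤ β := by linarith
  have hβ3 : β ≤ 3 := by linarith
  have ht : ∀ n, n < m → betaOrbit β (n + 1) = β ^ n * δ ∧ β ^ n * δ ≤ 1 / 2 := by
    have hb : ∀ n, n ≤ m → β ^ n * δ ≤ 1 / 2 := by
      intro n hn
      calc β ^ n * δ ≤ 3 ^ m * δ := by
            gcongr
            calc β ^ n ≤ 3 ^ n := by gcongr
              _ ≤ 3 ^ m := pow_le_pow_right₀ (by norm_num) hn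
        _ ≤ 1 / 2 := by linarith
    intro n hn
    refine ⟨?_, hb n hn.le⟩
    induction n with
    | zero =>
      simp only [betaOrbit, mul_one, pow_zero, one_mul]
      rw [hβd, show (2 : ℝ) + δ = δ + ((2 : ℤ) : ℝ) by push_cast; ring, Int.fract_add_intCast]
      exact Int.fract_eq_self.2 ⟨hδ.le, hδ1⟩
    | succ n ih =>
      rw [betaOrbit, ih (by omega), ← mul_assoc, ← pow_succ']
      exact Int.fract_eq_self.2 ⟨by positivity, by linarith [hb (n+1) hn.le]⟩
  have s1 := summ_aux _ gnum _ (bo_mem β) β hβ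
  have s2 := summ_aux _ gden _ (bo_mem β) β hβ
  have hNpos := sNum_pos (betaOrbit β) rfl (bo_mem β) β hβ
  have hN1 : sNum (betaOrbit β) β ≤ 1 := by
    have hs : Summable fun n : ℕ => (1 / 2 : ℝ) * (1 / 2) ^ n := summable_geometric_two.mul_left _
    have : ∑' n : ℕ, (1 / 2 : ℝ) * (1 / 2) ^ n = 1 := by
      rw [tsum_mul_left, tsum_geometric_two]; norm_num
    rw [← this]
    refine s1.tsum_le_tsum (fun n => ?_) hs
    have h := bo_mem β n
    have h2 : betaOrbit β n ^ 2 ≤ 1 := by nlinarith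
    have h3 : (2:ℝ) ^ n ≤ β ^ n := by gcongr
    calc betaOrbit β n ^ 2 / 2 / β ^ n ≤ 1 / 2 / 2 ^ n := by gcongr
      _ = _ := by rw [one_div_pow]; ring
  have hD : m * δ / 6 ≤ sDen (betaOrbit β) β - 2 * sNum (betaOrbit β) β := by
    have e : sDen (betaOrbit β) β - 2 * sNum (betaOrbit β) β
        = ∑' n, ((betaOrbit β n) / β ^ n - 2 * ((betaOrbit β n) ^ 2 / 2 / β ^ n)) := by
      unfold sDen sNum
      rw [← tsum_mul_left, ← s2.tsum_sub (s1.mul_left 2)]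
    have ss := s2.sub (s1.mul_left 2)
    have nn : ∀ n, 0 ≤ (betaOrbit β n) / β ^ n - 2 * ((betaOrbit β n) ^ 2 / 2 / β ^ n) := by
      intro n
      have h := bo_mem β n
      rw [show (betaOrbit β n) / β ^ n - 2 * ((betaOrbit β n) ^ 2 / 2 / β ^ n)
        = betaOrbit β n * (1 - betaOrbit β n) / β ^ n by ring]
      exact div_nonneg (mul_nonneg h.1 (by linarith)) (by positivity)
    rw [e]
    refine le_trans ?_ (ss.sum_le_tsum (Finset.range (m + 1)) (fun n _ => nn n))
    rw [Finset.sum_range_succ']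
    have key : ∑ n ∈ Finset.range m, δ / 6 ≤ ∑ n ∈ Finset.range m,
        ((betaOrbit β (n+1)) / β ^ (n+1) - 2 * ((betaOrbit β (n+1)) ^ 2 / 2 / β ^ (n+1))) := by
      refine Finset.sum_le_sum fun n hn => ?_
      obtain ⟨h1, h2⟩ := ht n (Finset.mem_range.1 hn)
      rw [h1]
      have hb : 0 < β := by linarith
      rw [show β ^ n * δ / β ^ (n+1) - 2 * ((β ^ n * δ) ^ 2 / 2 / β ^ (n+1))
        = δ * (1 - β ^ n * δ) / β by field_simp; ring]
      rw [div_le_div_iff₀ (by norm_num) hb]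
      nlinarith
    rw [Finset.sum_const, Finset.card_range, nsmul_eq_mul] at key
    have := nn 0
    linarith
  rw [inv_E, show sDen (betaOrbit β) β / sNum (betaOrbit β) β - 2
    = (sDen (betaOrbit β) β - 2 * sNum (betaOrbit β) β) / sNum (betaOrbit β) β by field_simp]
  rw [le_div_iff₀ hNpos]
  have : 0 ≤ m * δ / 6 := by positivity
  nlinarith

/-- For `F = id` and every `ε > 0`, `ψ^ε` has a fixed point in `(2,3)`. -/
theorem stmt16 (ε : ℝ) (hε : 0 < ε) :
    ∃ β : ℝ, 2 < β ∧ β < 3 ∧ psi ε id β = β := by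
  obtain ⟨m, hm⟩ := exists_nat_gt (6 / ε)
  have h3 : (1:ℝ) ≤ 3 ^ m := one_le_pow₀ (by norm_num)
  obtain ⟨δ, hδ⟩ : ∃ δ : ℝ, δ = 1 / (2 * 3 ^ m) := ⟨_, rfl⟩
  have hδ0 : 0 < δ := by rw [hδ]; positivity
  have hδm : δ * 3 ^ m = 1 / 2 := by rw [hδ]; field_simp
  have hδ1 : δ < 1 := by nlinarith
  have hn := near_two m δ hδ0 hδm.le hδ1
  rw [div_lt_iff₀ hε] at hm
  have hG0 : 0 < ε * (1 / Ebeta (2 + δ) - 2) - δ := by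
    have := mul_le_mul_of_nonneg_left hn hε.le
    nlinarith
  have hcont : ContinuousOn (fun b => 2 + ε * (1 / Ebeta b - 2) - b) (Set.Icc (2 + δ) 3) := by
    intro b hb
    have h := cont_E b (by linarith [hb.1])
    have h' : ContinuousAt (fun b => 2 + ε * (1 / Ebeta b - 2) - b) b :=
      (((h.sub_const 2).const_mul ε).const_add 2).sub continuousAt_id
    exact h'.continuousWithinAt
  have hiv := intermediate_value_Ioo' (by linarith : 2 + δ ≤ 3) hcont
  have hmem : (0:ℝ) ∈ Set.Ioo (2 + ε * (1 / Ebeta 3 - 2) - 3)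
      (2 + ε * (1 / Ebeta (2 + δ) - 2) - (2 + δ)) := by
    rw [E_three]
    constructor <;> linarith
  obtain ⟨b, hb, hb0⟩ := hiv hmem
  refine ⟨b, by linarith [hb.1], hb.2, ?_⟩
  simp only [psi, id]
  simp only at hb0
  linarith
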